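/- Let k be an algebraically closed field of characteristic p > 0, let F = k(q, r, s) be the rational function field in three variables, and let K = F((t)) be the field of formal Laurent series over F. Then the polynomial g = ((X^p − q)^p − t^p·r)^p + t^{p⁴}·X − t^{p³}·s ∈ K[X] is irreducible over K and separable; in particular, L := K[X]/(g) is a separable field extension of K of degree p³. -/

import Mathlib

open Polynomial

/-!
A root `x` of `g` forces `p`-th roots of `q`, `r` and `s` modulo `t` into the integral closure `B`
of `F⟦t⟧` in `K(x)`. Indeed, `g(x) = 0` shows that `t^{p³}` divides `((xᵖ - q)ᵖ - tᵖr)ᵖ`; as `B` is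
integrally closed, extracting `p`-th roots gives first `(xᵖ - q)ᵖ - tᵖr = t^{p²}w`, then
`xᵖ - q = ty`, and cancelling powers of `t` leaves `yᵖ ≡ r` and `wᵖ ≡ s` modulo `t`. Since `q`, `r`,
`s` are `p`-independent, the `p³` monomials in `x`, `y`, `w` with exponents below `p` are linearly
independent over `F` in `B / tB`, and by flatness of `B` over `F⟦t⟧` they are linearly independent
over `K`. Hence `[K(x) : K] ≥ p³ = deg g`.
-/

open IsLocalRing IntermediateField TensorProduct

section PIndependence

variable (p : ℕ) {ι R : Type*} [Fintype ι] [CommRing R]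

/-- A finite family `x` in a commutative ring `R` of exponential characteristic `p` is
`p`-independent if the monomials in `x` with all exponents less than `p` are linearly independent
over the subring `Rᵖ` of `p`-th powers. -/
def PIndependent [ExpChar R p] (x : ι → R) : Prop :=
  LinearIndependent (frobenius R p).range fun n : ι → Fin p ↦ ∏ i, x i ^ (n i : ℕ)

variable {p}

theorem pIndependent_iff [DecidableEq ι] [ExpChar R p] {x : ι → R} :
    PIndependent p x ↔ ∀ c : (ι → Fin p) → R,
      ∑ n, c n ^ p * ∏ i, x i ^ (n i : ℕ) = 0 → ∀ n, c n ^ p = 0 := by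
  rw [PIndependent, Fintype.linearIndependent_iff]
  refine ⟨fun h c hc n ↦ ?_, fun h c hc n ↦ ?_⟩
  · exact congrArg Subtype.val (h (fun n ↦ ⟨c n ^ p, c n, rfl⟩) hc n)
  · choose d hd using fun n ↦ (c n).2
    have hcd : ∀ n, d n ^ p = c n := hd
    exact Subtype.ext (hcd n ▸ h d (by simpa only [hcd, Subring.smul_def, smul_eq_mul] using hc) n)

namespace PIndependent

theorem map_ringEquiv {S : Type*} [CommRing S] [ExpChar R p] [ExpChar S p] {x : ι → R}
    (hx : PIndependent p x) (e : R ≃+* S) : PIndependent p (e ∘ x) := by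
  classical
  refine pIndependent_iff.mpr fun c hc n ↦ e.symm.injective ?_
  have hc' := congrArg e.symm hc
  simp only [map_sum, map_mul, map_prod, map_pow, Function.comp_apply, e.symm_apply_apply,
    map_zero] at hc'
  simpa using pIndependent_iff.mp hx (fun n ↦ e.symm (c n)) hc' n

theorem algebraMap_comp {K : Type*} [CommRing K] [Algebra R K] [IsFractionRing R K] [ExpChar R p]
    [ExpChar K p] {x : ι → R} (hx : PIndependent p x) : PIndependent p (algebraMap R K ∘ x) := by
  classical
  refine pIndependent_iff.mpr fun c hc n ↦ ?_
  obtain ⟨b, hb⟩ := IsLocalization.exist_integer_multiples_of_finite (nonZeroDivisors R) c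
  choose d hd using hb
  simp only [Algebra.smul_def] at hd
  have hsum : ∑ n, d n ^ p * ∏ i, x i ^ (n i : ℕ) = 0 := by
    apply IsFractionRing.injective R K
    simp only [map_sum, map_mul, map_pow, map_prod, hd, map_zero, mul_pow, mul_assoc]
    rw [← Finset.mul_sum]
    exact mul_eq_zero_of_right _ hc
  have hbc : algebraMap R K b ^ p * c n ^ p = 0 := by
    rw [← mul_pow, ← hd, ← map_pow, pIndependent_iff.mp hx d hsum n, map_zero]
  exact ((IsLocalization.map_units K b).pow p).mul_right_eq_zero.mp hbc

theorem linearIndependent_of_pow_eq [IsReduced R] [ExpChar R p] {A : Type*} [CommRing A]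
    [Algebra R A] [FaithfulSMul R A] {x : ι → R} (hx : PIndependent p x) {z : ι → A}
    (hz : ∀ i, z i ^ p = algebraMap R A (x i)) :
    LinearIndependent R fun n : ι → Fin p ↦ ∏ i, z i ^ (n i : ℕ) := by
  classical
  have : ExpChar A p := expChar_of_injective_algebraMap (FaithfulSMul.algebraMap_injective R A) p
  refine Fintype.linearIndependent_iff.mpr fun c hc n ↦ ?_
  have hmonomial (n : ι → Fin p) :
      (∏ i, z i ^ (n i : ℕ)) ^ p = algebraMap R A (∏ i, x i ^ (n i : ℕ)) := by
    simp only [← Finset.prod_pow, pow_right_comm _ _ p, hz, map_prod, map_pow]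
  have hsum : ∑ n, c n ^ p * ∏ i, x i ^ (n i : ℕ) = 0 := by
    apply FaithfulSMul.algebraMap_injective R A
    calc algebraMap R A (∑ n, c n ^ p * ∏ i, x i ^ (n i : ℕ))
        = (∑ n, c n • ∏ i, z i ^ (n i : ℕ)) ^ p := by
          simp only [sum_pow_char p, Algebra.smul_def, mul_pow, hmonomial, map_sum, map_mul,
            map_pow]
      _ = algebraMap R A 0 := by rw [hc, zero_pow (expChar_ne_zero R p), map_zero]
  exact eq_zero_of_pow_eq_zero (pIndependent_iff.mp hx c hsum n)

theorem linearIndependent_of_pow_sub_mem [IsLocalRing R] [ExpChar (ResidueField R) p]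
    {B : Type*} [CommRing B] [Algebra R B] [Module.FaithfullyFlat R B] {x : ι → R}
    (hx : PIndependent p (residue R ∘ x)) {z : ι → B}
    (hz : ∀ i, z i ^ p - algebraMap R B (x i) ∈ (maximalIdeal R).map (algebraMap R B)) :
    LinearIndependent R fun n : ι → Fin p ↦ ∏ i, z i ^ (n i : ℕ) := by
  let φ : B →ₐ[R] ResidueField R ⊗[R] B := Algebra.TensorProduct.includeRight
  have hφ : (maximalIdeal R).map (algebraMap R B) ≤ RingHom.ker φ := by
    refine Ideal.map_le_iff_le_comap.mpr fun a ha ↦ ?_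
    rw [Ideal.mem_comap, RingHom.mem_ker, AlgHom.commutes,
      IsScalarTower.algebraMap_apply R (ResidueField R), ResidueField.algebraMap_eq,
      (residue_eq_zero_iff a).mpr ha, map_zero]
  have hφz (i : ι) : φ (z i) ^ p = algebraMap (ResidueField R) _ (residue R (x i)) := by
    rw [← ResidueField.algebraMap_eq, ← IsScalarTower.algebraMap_apply, ← map_pow,
      ← φ.commutes, ← sub_eq_zero, ← map_sub]
    exact hφ (hz i)
  apply Module.IsLocalRing.linearIndependent_of_flat
  have hφ_monomial : (φ ∘ fun n : ι → Fin p ↦ ∏ i, z i ^ (n i : ℕ)) =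
      fun n ↦ ∏ i, φ (z i) ^ (n i : ℕ) := by
    ext n
    simp only [Function.comp_apply, map_prod, map_pow]
  change LinearIndependent (ResidueField R) (φ ∘ _)
  rw [hφ_monomial]
  exact hx.linearIndependent_of_pow_eq hφz

end PIndependent

end PIndependence

section MvPolynomial

variable {σ R : Type*} [CommRing R] {p : ℕ} [ExpChar R p]

theorem coeff_smul_pow_expChar (f : MvPolynomial σ R) (m : σ →₀ ℕ) :
    (f ^ p).coeff (p • m) = f.coeff m ^ p := by
  rw [← MvPolynomial.map_frobenius_expand p, MvPolynomial.coeff_map,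
    MvPolynomial.coeff_expand_smul p (expChar_ne_zero R p), frobenius_def]

theorem coeff_pow_expChar_of_not_dvd (f : MvPolynomial σ R) {m : σ →₀ ℕ} {i : σ}
    (h : ¬p ∣ m i) : (f ^ p).coeff m = 0 := by
  rw [← MvPolynomial.map_frobenius_expand p, MvPolynomial.coeff_map,
    MvPolynomial.coeff_expand_of_not_dvd _ h, map_zero]

theorem coeff_pow_expChar_mul_prod_X [Fintype σ] (f : MvPolynomial σ R)
    (m : σ →₀ ℕ) (n k : σ → Fin p) :
    (f ^ p * ∏ i, MvPolynomial.X i ^ (n i : ℕ)).coeff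
      (p • m + Finsupp.equivFunOnFinite.symm fun i ↦ (k i : ℕ)) =
      if n = k then f.coeff m ^ p else 0 := by
  have hmonomial : ∏ i, (MvPolynomial.X i : MvPolynomial σ R) ^ (n i : ℕ) =
      MvPolynomial.monomial (Finsupp.equivFunOnFinite.symm fun i ↦ (n i : ℕ)) 1 := by
    rw [MvPolynomial.monomial_eq, Finsupp.prod_fintype _ _ (by simp)]
    simp
  rw [hmonomial]
  split_ifs with hnk
  · rw [hnk, MvPolynomial.coeff_mul_monomial, mul_one, coeff_smul_pow_expChar]
  · obtain ⟨i, hi⟩ := Function.ne_iff.mp hnk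
    rw [MvPolynomial.coeff_mul_monomial', mul_one]
    split_ifs with hle
    · refine coeff_pow_expChar_of_not_dvd f (i := i) fun hdvd ↦ hi (Fin.ext ?_)
      have hmod : (n i : ℕ) ≡ p * m i + k i [MOD p] :=
        (Nat.modEq_iff_dvd' (by simpa using hle i)).mpr (by simpa using hdvd)
      exact (hmod.trans (by simp [Nat.ModEq])).eq_of_lt_of_lt (n i).2 (k i).2
    · rfl

theorem pIndependent_mvPolynomial_X [Fintype σ] :
    PIndependent p (MvPolynomial.X : σ → MvPolynomial σ R) := by
  classical
  refine pIndependent_iff.mpr fun c hc k ↦ ?_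
  have hmap : MvPolynomial.map (frobenius R p) (c k) = 0 := by
    ext m
    have hm := congrArg (MvPolynomial.coeff
      (p • m + Finsupp.equivFunOnFinite.symm fun i ↦ (k i : ℕ))) hc
    rw [MvPolynomial.coeff_map, frobenius_def]
    simpa [MvPolynomial.coeff_sum, coeff_pow_expChar_mul_prod_X] using hm
  rw [← MvPolynomial.map_frobenius_expand p, MvPolynomial.map_expand, hmap, map_zero]

end MvPolynomial

section PthRootsPoly

variable {A : Type*} [CommRing A]

/-- The polynomial `((Xᵖ − Q₀)ᵖ − tᵖQ₁)ᵖ + t^{p⁴}X − t^{p³}Q₂`. Adjoining a root of it to the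
fraction field of a discrete valuation ring whose maximal ideal contains `t` forces `p`-th roots of
`Q₀`, `Q₁` and `Q₂` into the residue field. -/
noncomputable def pthRootsPoly (p : ℕ) (Q : Fin 3 → A) (t : A) : A[X] :=
  ((X ^ p - C (Q 0)) ^ p - C (t ^ p * Q 1)) ^ p + C (t ^ (p ^ 4)) * X - C (t ^ (p ^ 3) * Q 2)

theorem map_pthRootsPoly {B : Type*} [CommRing B] (f : A →+* B) (p : ℕ) (Q : Fin 3 → A) (t : A) :
    (pthRootsPoly p Q t).map f = pthRootsPoly p (f ∘ Q) (f t) := by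
  simp [pthRootsPoly]

theorem isMonicOfDegree_pthRootsPoly [Nontrivial A] {p : ℕ} (hp : 1 < p) (Q : Fin 3 → A) (t : A) :
    IsMonicOfDegree (pthRootsPoly p Q t) (p ^ 3) := by
  have hp₀ : 0 < p := by lia
  have hlin : (C (t ^ p ^ 4) * X - C (t ^ p ^ 3 * Q 2)).natDegree < p ^ 3 :=
    calc (C (t ^ p ^ 4) * X - C (t ^ p ^ 3 * Q 2)).natDegree ≤ 1 := by compute_degree
      _ < p ^ 3 := Nat.one_lt_pow three_ne_zero hp
  have hinner : IsMonicOfDegree (X ^ p - C (Q 0)) p :=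
    (isMonicOfDegree_X_pow A p).sub (by rwa [natDegree_C])
  have hmiddle : IsMonicOfDegree ((X ^ p - C (Q 0)) ^ p - C (t ^ p * Q 1)) (p * p) :=
    (hinner.pow p).sub (by rw [natDegree_C]; positivity)
  have houter : IsMonicOfDegree (((X ^ p - C (Q 0)) ^ p - C (t ^ p * Q 1)) ^ p) (p ^ 3) := by
    convert hmiddle.pow p using 1
    ring
  rw [pthRootsPoly, add_sub_assoc]
  exact houter.add_right hlin

theorem derivative_pthRootsPoly (p : ℕ) [CharP A p] (Q : Fin 3 → A) (t : A) :
    derivative (pthRootsPoly p Q t) = C (t ^ (p ^ 4)) := by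
  simp [pthRootsPoly, derivative_pow]

theorem separable_pthRootsPoly (p : ℕ) [CharP A p] (Q : Fin 3 → A) {t : A} (ht : IsUnit t) :
    (pthRootsPoly p Q t).Separable := by
  obtain ⟨u, hu⟩ := ht.pow (p ^ 4)
  refine ⟨0, C ↑u⁻¹, ?_⟩
  rw [derivative_pthRootsPoly, ← hu, zero_mul, zero_add, ← C_mul, u.inv_mul, C_1]

theorem exists_dvd_pow_sub_of_isRoot_pthRootsPoly [IsDomain A] [IsIntegrallyClosed A] {p : ℕ}
    (hp : 1 < p) {Q : Fin 3 → A} {t x : A} (ht : t ≠ 0) (hx : (pthRootsPoly p Q t).IsRoot x) :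
    ∃ z : Fin 3 → A, ∀ i, t ∣ z i ^ p - Q i := by
  have hp₀ : p ≠ 0 := by lia
  have hp₂ : p < p ^ 2 := lt_self_pow₀ hp one_lt_two
  have hp₄ : p ^ 3 < p ^ 4 := Nat.pow_lt_pow_right hp (by lia)
  have hg : ((x ^ p - Q 0) ^ p - t ^ p * Q 1) ^ p =
      t ^ p ^ 3 * (Q 2 - t ^ (p ^ 4 - p ^ 3) * x) := by
    simp only [pthRootsPoly, IsRoot.def, eval_sub, eval_add, eval_mul, eval_pow, eval_X,
      eval_C] at hx
    rw [mul_sub, ← mul_assoc, ← pow_add, Nat.add_sub_cancel' hp₄.le]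
    linear_combination hx
  obtain ⟨w, hw⟩ : t ^ p ^ 2 ∣ (x ^ p - Q 0) ^ p - t ^ p * Q 1 := by
    rw [← IsIntegrallyClosed.pow_dvd_pow_iff hp₀, ← pow_mul, ← pow_succ, hg]
    exact dvd_mul_right _ _
  obtain ⟨y, hy⟩ : t ∣ x ^ p - Q 0 := by
    rw [← IsIntegrallyClosed.pow_dvd_pow_iff hp₀, sub_eq_iff_eq_add.mp hw]
    exact dvd_add (dvd_mul_of_dvd_left (pow_dvd_pow t hp₂.le) w) (dvd_mul_right _ _)
  have hyw : y ^ p - Q 1 = t ^ (p ^ 2 - p) * w := by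
    refine mul_left_cancel₀ (pow_ne_zero p ht) ?_
    rw [← mul_assoc, ← pow_add, Nat.add_sub_cancel' hp₂.le, ← hw, hy]
    ring
  have hwx : w ^ p - Q 2 = -(t ^ (p ^ 4 - p ^ 3) * x) := by
    refine mul_left_cancel₀ (pow_ne_zero (p ^ 3) ht) ?_
    rw [hw, mul_pow, ← pow_mul, ← pow_succ] at hg
    linear_combination hg
  have hdvd {m n : ℕ} (h : m < n) : t ∣ t ^ (n - m) := dvd_pow_self t (Nat.sub_ne_zero_of_lt h)
  refine ⟨![x, y, w], Fin.forall_fin_succ.mpr ⟨⟨y, hy⟩, Fin.forall_fin_two.mpr ⟨?_, ?_⟩⟩⟩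
  · exact hyw ▸ (hdvd hp₂).mul_right w
  · exact hwx ▸ ((hdvd hp₄).mul_right x).neg_right

end PthRootsPoly

section Irreducible

theorem irreducible_of_natDegree_le_finrank {K L : Type*} [Field K] [Field L] [Algebra K L]
    {g : K[X]} (hg : g.Monic) {x : L} (hx : aeval x g = 0)
    (h : g.natDegree ≤ Module.finrank K K⟮x⟯) : Irreducible g := by
  have hint : IsIntegral K x := ⟨g, hg, hx⟩
  rw [adjoin.finrank hint] at h
  rw [eq_of_monic_of_dvd_of_natDegree_le (minpoly.monic hint) hg (minpoly.dvd K x hx) h]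
  exact minpoly.irreducible hint

variable {R K : Type*} [CommRing R] [IsDomain R] [IsDiscreteValuationRing R] [Field K]
  [Algebra R K] [IsFractionRing R K] {p : ℕ} [ExpChar (ResidueField R) p] {Q : Fin 3 → R} {t : R}

theorem pow_three_le_finrank_of_aeval_pthRootsPoly_eq_zero {L : Type*} [Field L]
    [Algebra R L] [Algebra K L] [IsScalarTower R K L] [FiniteDimensional K L] (hp : 1 < p)
    (hQ : PIndependent p (residue R ∘ Q)) (ht : t ∈ maximalIdeal R) (ht₀ : t ≠ 0) {x : L}
    (hx : aeval x (pthRootsPoly p Q t) = 0) : p ^ 3 ≤ Module.finrank K L := by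
  have : FaithfulSMul R L := FaithfulSMul.trans R K L
  have := integralClosure.isIntegrallyClosedOfFiniteExtension (R := R) K (L := L)
  let B := integralClosure R L
  let b : B := ⟨x, pthRootsPoly p Q t, (isMonicOfDegree_pthRootsPoly hp Q t).monic, hx⟩
  have hb : (pthRootsPoly p (algebraMap R B ∘ Q) (algebraMap R B t)).IsRoot b := by
    rw [← map_pthRootsPoly, IsRoot.def, eval_map_algebraMap]
    exact Subtype.ext ((aeval_subalgebra_coe _ B b).trans hx)
  obtain ⟨z, hz⟩ := exists_dvd_pow_sub_of_isRoot_pthRootsPoly hp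
    ((map_ne_zero_iff _ (FaithfulSMul.algebraMap_injective R B)).mpr ht₀) hb
  have hB : LinearIndependent R fun n : Fin 3 → Fin p ↦ ∏ i, z i ^ (n i : ℕ) :=
    hQ.linearIndependent_of_pow_sub_mem fun i ↦
      Ideal.mem_of_dvd _ (hz i) (Ideal.mem_map_of_mem _ ht)
  have hL := hB.map' B.val.toLinearMap (LinearMap.ker_eq_bot.mpr Subtype.val_injective)
  simpa using ((LinearIndependent.iff_fractionRing R K).mp hL).fintype_card_le_finrank

theorem irreducible_map_pthRootsPoly (hp : 1 < p) (hQ : PIndependent p (residue R ∘ Q))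
    (ht : t ∈ maximalIdeal R) (ht₀ : t ≠ 0) :
    Irreducible ((pthRootsPoly p Q t).map (algebraMap R K)) := by
  have hg : IsMonicOfDegree ((pthRootsPoly p Q t).map (algebraMap R K)) (p ^ 3) := by
    rw [map_pthRootsPoly]
    exact isMonicOfDegree_pthRootsPoly hp _ _
  have hdeg : ((pthRootsPoly p Q t).map (algebraMap R K)).degree ≠ 0 := by
    refine degree_ne_of_natDegree_ne (n := 0) ?_
    rw [hg.natDegree_eq]
    positivity
  obtain ⟨x, hx⟩ := IsAlgClosed.exists_aeval_eq_zero (AlgebraicClosure K) _ hdeg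
  have : FiniteDimensional K K⟮x⟯ := adjoin.finiteDimensional ⟨_, hg.monic, hx⟩
  refine irreducible_of_natDegree_le_finrank hg.monic hx (hg.natDegree_eq.trans_le ?_)
  have hgen : aeval (AdjoinSimple.gen K x) ((pthRootsPoly p Q t).map (algebraMap R K)) = 0 := by
    rwa [← aeval_algebraMap_eq_zero_iff (AlgebraicClosure K), AdjoinSimple.algebraMap_gen]
  rw [aeval_map_algebraMap] at hgen
  exact pow_three_le_finrank_of_aeval_pthRootsPoly_eq_zero hp hQ ht ht₀ hgen

end Irreducible

section LaurentSeries

variable {F : Type*} [Field F]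

theorem residueFieldOfPowerSeries_residue (f : PowerSeries F) :
    PowerSeries.residueFieldOfPowerSeries (residue (PowerSeries F) f) =
      PowerSeries.constantCoeff f :=
  rfl

theorem PIndependent.residue_comp_C {p : ℕ} {ι : Type*} [Fintype ι] [ExpChar F p]
    [ExpChar (ResidueField (PowerSeries F)) p] {x : ι → F} (hx : PIndependent p x) :
    PIndependent p (residue (PowerSeries F) ∘ PowerSeries.C ∘ x) := by
  have hresidue : residue (PowerSeries F) ∘ PowerSeries.C ∘ x =
      PowerSeries.residueFieldOfPowerSeries.symm ∘ x := by
    ext i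
    simp only [Function.comp_apply, RingEquiv.eq_symm_apply, residueFieldOfPowerSeries_residue,
      PowerSeries.constantCoeff_C]
  rw [hresidue]
  exact hx.map_ringEquiv _

theorem irreducible_separable_example_general (p : ℕ) [Fact p.Prime] [CharP F p] {Q : Fin 3 → F}
    (hQ : PIndependent p Q) {g : (LaurentSeries F)[X]}
    (hg : g = pthRootsPoly p (algebraMap F (LaurentSeries F) ∘ Q) (HahnSeries.single 1 1)) :
    Irreducible g ∧ g.Separable ∧ g.natDegree = p ^ 3 := by
  have hp : 1 < p := Nat.Prime.one_lt Fact.out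
  have : CharP (LaurentSeries F) p :=
    charP_of_injective_ringHom (algebraMap F (LaurentSeries F)).injective p
  have : CharP (ResidueField (PowerSeries F)) p :=
    charP_of_injective_ringHom (algebraMap F (ResidueField (PowerSeries F))).injective p
  have hmap : g = (pthRootsPoly p (PowerSeries.C ∘ Q) PowerSeries.X).map
      (algebraMap (PowerSeries F) (LaurentSeries F)) := by
    rw [hg, map_pthRootsPoly, LaurentSeries.coe_algebraMap, HahnSeries.ofPowerSeries_X]
    rfl
  refine ⟨?_, ?_, ?_⟩
  · rw [hmap]
    refine irreducible_map_pthRootsPoly hp hQ.residue_comp_C ?_ PowerSeries.X_ne_zero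
    rw [PowerSeries.maximalIdeal_eq_span_X]
    exact Ideal.mem_span_singleton_self _
  · rw [hg]
    exact separable_pthRootsPoly p _ (IsUnit.mk0 _ (HahnSeries.single_ne_zero one_ne_zero))
  · rw [hg]
    exact (isMonicOfDegree_pthRootsPoly hp _ _).natDegree_eq

end LaurentSeries

/-- Over `K = k(q,r,s)((t))` with `k` algebraically closed of characteristic `p > 0`, the
polynomial `g = ((Xᵖ − q)ᵖ − tᵖ·r)ᵖ + t^{p⁴}·X − t^{p³}·s` is irreducible and separable;
its degree is `p³`. -/
theorem irreducible_separable_example {k : Type*} [Field k] [IsAlgClosed k]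
    (p : ℕ) [hp : Fact p.Prime] [CharP k p]
    (F : Type*) [Field F] [Algebra (MvPolynomial (Fin 3) k) F]
    [IsFractionRing (MvPolynomial (Fin 3) k) F]
    (q r s : F)
    (hq : q = algebraMap (MvPolynomial (Fin 3) k) F (MvPolynomial.X 0))
    (hr : r = algebraMap (MvPolynomial (Fin 3) k) F (MvPolynomial.X 1))
    (hs : s = algebraMap (MvPolynomial (Fin 3) k) F (MvPolynomial.X 2))
    (t : LaurentSeries F) (ht : t = HahnSeries.single (1 : ℤ) (1 : F))
    (g : Polynomial (LaurentSeries F))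
    (hg : g = ((X ^ p - C (algebraMap F (LaurentSeries F) q)) ^ p
          - C (t ^ p * algebraMap F (LaurentSeries F) r)) ^ p
        + C (t ^ (p ^ 4)) * X - C (t ^ (p ^ 3) * algebraMap F (LaurentSeries F) s)) :
    Irreducible g ∧ g.Separable ∧ g.natDegree = p ^ 3 := by
  have : CharP F p := IsFractionRing.charP_of_isFractionRing (MvPolynomial (Fin 3) k) p
  subst hq hr hs ht
  exact irreducible_separable_example_general p
    (pIndependent_mvPolynomial_X (R := k)).algebraMap_comp hg
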